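/- arXiv:2603.16547 — 3 statements merged into one kernel-verified Lean document; each statement's English description precedes it below -/
import Mathlib

section
/- Let y_1, …, y_m be real numbers with |y_i| ≤ 1 for every i and Σ_{i=1}^m y_i = 0. Then there exists a permutation τ of {1,…,m} such that for every p ∈ {1,…,m} the partial sum Σ_{k=1}^p y_{τ(k)} satisfies |Σ_{k=1}^p y_{τ(k)}| ≤ 1. -/
/-!
Read the reordered sums as a walk on a line that has to stay in an interval `[a, b]`, and choose the
steps greedily. Suppose that every remaining step leaves the interval: the nonnegative ones at the
top, the nonpositive ones at the bottom. Both kinds occur, since otherwise the endpoint of the walk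
would lie even further outside than the position after a single step. But then a step of one kind
and a step of the other differ by more than `b - a`.
-/

open Set

section Greedy

variable {G ι : Type*} [AddCommGroup G] [LinearOrder G] [IsOrderedAddMonoid G]
  [Fintype ι] [Nonempty ι] {a b x : G} {y : ι → G}

lemma exists_nonneg_add_le_or_exists_nonpos (hend : x + ∑ i, y i ≤ b) :
    (∃ i, 0 ≤ y i ∧ x + y i ≤ b) ∨ ∃ i, y i ≤ 0 := by
  by_contra! ⟨hexit, hpos⟩
  obtain ⟨i⟩ := ‹Nonempty ι›
  have hle : y i ≤ ∑ j, y j :=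
    Finset.single_le_sum (fun j _ => (hpos j).le) (Finset.mem_univ i)
  exact (hexit i (hpos i).le).not_ge ((add_le_add_right hle x).trans hend)

lemma exists_nonpos_le_add_or_exists_nonneg (hend : a ≤ x + ∑ i, y i) :
    (∃ i, y i ≤ 0 ∧ a ≤ x + y i) ∨ ∃ i, 0 ≤ y i :=
  exists_nonneg_add_le_or_exists_nonpos (G := Gᵒᵈ) hend

lemma exists_add_mem_Icc (hy : ∀ i j, y i - y j ≤ b - a) (hx : x ∈ Icc a b)
    (hend : x + ∑ i, y i ∈ Icc a b) : ∃ i, x + y i ∈ Icc a b := by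
  rcases exists_nonneg_add_le_or_exists_nonpos hend.2 with ⟨i, hi, hib⟩ | ⟨j, hj⟩
  · exact ⟨i, hx.1.trans (le_add_of_nonneg_right hi), hib⟩
  rcases exists_nonpos_le_add_or_exists_nonneg hend.1 with ⟨i, hi, hai⟩ | ⟨i, hi⟩
  · exact ⟨i, hai, (add_le_of_nonpos_right hi).trans hx.2⟩
  by_contra! hexit
  have htop : b < x + y i :=
    not_le.1 fun h => hexit i ⟨hx.1.trans (le_add_of_nonneg_right hi), h⟩
  have hbot : x + y j < a :=
    not_le.1 fun h => hexit j ⟨h, (add_le_of_nonpos_right hj).trans hx.2⟩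
  have hgap : b - a < y i - y j := by
    simpa only [add_sub_add_left_eq_sub] using sub_lt_sub htop hbot
  exact hgap.not_ge (hy i j)

end Greedy

theorem one_dim_balancing_general {G : Type*} [AddCommGroup G] [LinearOrder G]
    [IsOrderedAddMonoid G] {a b : G} {m : ℕ} {y : Fin m → G} {x : G}
    (hy : ∀ i j, y i - y j ≤ b - a) (hx : x ∈ Icc a b) (hend : x + ∑ i, y i ∈ Icc a b) :
    ∃ τ : Equiv.Perm (Fin m), ∀ p : ℕ,
      x + ∑ k ∈ Finset.univ.filter (fun k : Fin m => (k : ℕ) < p), y (τ k) ∈ Icc a b := by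
  induction m generalizing x with
  | zero => exact ⟨1, fun p => by simpa using hx⟩
  | succ m ih =>
    obtain ⟨i, hi⟩ := exists_add_mem_Icc hy hx hend
    have hrest : ∑ k, y k = y i + ∑ k : Fin m, y (Equiv.swap 0 i k.succ) := by
      rw [← Equiv.sum_comp (Equiv.swap 0 i) y, Fin.sum_univ_succ, Equiv.swap_apply_left]
    rw [hrest, ← add_assoc] at hend
    obtain ⟨τ, hτ⟩ := ih (fun _ _ => hy _ _) hi hend
    refine ⟨Equiv.Perm.decomposeFin.symm (i, τ), fun p => ?_⟩
    cases p with
    | zero => simpa using hx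
    | succ p =>
      simpa [Finset.sum_filter, Fin.sum_univ_succ, add_assoc] using hτ p

/-- **One-dimensional balancing lemma.** Real numbers `y₁, …, y_m` with `|yᵢ| ≤ 1`
summing to zero can be reordered so that every partial sum lies in `[-1, 1]`. -/
theorem one_dim_balancing (m : ℕ) (y : Fin m → ℝ)
    (hy : ∀ i, |y i| ≤ 1) (hsum : ∑ i, y i = 0) :
    ∃ τ : Equiv.Perm (Fin m), ∀ p : ℕ, 1 ≤ p → p ≤ m →
      |∑ k ∈ Finset.univ.filter (fun k : Fin m => (k : ℕ) < p), y (τ k)| ≤ 1 := by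
  have hdiff (i j : Fin m) : y i - y j ≤ 1 - (-1) := by
    linarith [(abs_le.1 (hy i)).2, (abs_le.1 (hy j)).1]
  obtain ⟨τ, hτ⟩ := one_dim_balancing_general (x := 0) hdiff (by simp) (by simp [hsum])
  exact ⟨τ, fun p _ _ => by simpa [abs_le] using hτ p⟩
end

section
/- Let v_1, …, v_n be vectors in ℝ² with ‖v_i‖ ≤ 1 for every i and with Σ_{i=1}^n v_i = 0. Then there exists a permutation σ of {1,…,n} such that for every p ∈ {1,…,n} the partial sum S_p = Σ_{k=1}^p v_{σ(k)} satisfies ‖S_p‖ ≤ 2. -/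
/-!
Call a set `A` of indices good if `∑ i ∈ A, v i` equals a combination `∑ i ∈ A, w i • v i` with
weights in `[0, 1]` of total at most `d`, the dimension; then `‖∑ i ∈ A, v i‖ ≤ d`. The whole index
set is good with `w = 0`, so it is enough to see that a nonempty good set stays good after the
removal of a suitable element. Sets of at most `d` elements are good with `w = 1`.

If a good set `A` has more than `d` elements, sliding `w` towards the constant weight `1` raises its
total to exactly `d + 1`. Move to an extreme point of the polytope of all such weights: the weights
there that lie strictly between `0` and `1` belong to linearly independent vectors `(v i, 1)`, so
there are at most `d + 1` of them. As the total is `d + 1`, they cannot account for all of it, and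
some weight is `1`; the corresponding index can be removed.
-/

open Set Filter Topology Module

namespace Steinitz

lemma eventually_add_smul_mem_Icc {ι : Type*} [Finite ι] {l u x w : ι → ℝ} (hx : x ∈ Icc l u)
    (hw : ∀ i, w i ≠ 0 → x i ∈ Ioo (l i) (u i)) :
    ∀ᶠ ε : ℝ in 𝓝 0, x + ε • w ∈ Icc l u := by
  have hcoord : ∀ᶠ ε : ℝ in 𝓝 0, ∀ i, x i + ε * w i ∈ Icc (l i) (u i) := by
    refine eventually_all.2 fun i => ?_
    by_cases hi : w i = 0
    · simp [hi, hx.1 i, hx.2 i]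
    · have hcont : Tendsto (fun ε : ℝ => x i + ε * w i) (𝓝 0) (𝓝 (x i)) :=
        Continuous.tendsto' (by fun_prop) 0 (x i) (by simp)
      exact hcont.eventually (Icc_mem_nhds (hw i hi).1 (hw i hi).2)
  exact hcoord.mono fun ε hε => ⟨fun i => (hε i).1, fun i => (hε i).2⟩

section Box

variable {ι E : Type*} [Fintype ι] [AddCommGroup E] [Module ℝ E]

/-- The feasible polytope of a bounded linear program: the coefficient vectors `x` in the box
`[l, u]` for which the linear combination `∑ i, x i • v i` has the prescribed value `b`. -/
def boxFiber (v : ι → E) (l u : ι → ℝ) (b : E) : Set (ι → ℝ) :=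
  Icc l u ∩ Fintype.linearCombination ℝ v ⁻¹' {b}

variable {v : ι → E} {l u x w : ι → ℝ} {b : E}

lemma convex_boxFiber : Convex ℝ (boxFiber v l u b) :=
  (convex_Icc l u).inter ((convex_singleton b).linear_preimage _)

lemma isCompact_boxFiber : IsCompact (boxFiber v l u b) := by
  refine isCompact_Icc.of_isClosed_subset ?_ inter_subset_left
  obtain hempty | ⟨x, hx⟩ := (boxFiber v l u b).eq_empty_or_nonempty
  · exact hempty ▸ isClosed_empty
  -- `E` has no topology: the fiber is closed as a translate of a finite-dimensional kernel.
  have hfiber : Fintype.linearCombination ℝ v ⁻¹' {b} =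
      (· - x) ⁻¹' (LinearMap.ker (Fintype.linearCombination ℝ v) : Set (ι → ℝ)) := by
    ext y
    have hxb : Fintype.linearCombination ℝ v x = b := hx.2
    simp [hxb, sub_eq_zero]
  rw [boxFiber, hfiber]
  exact isClosed_Icc.inter
    ((Submodule.closed_of_finiteDimensional _).preimage (continuous_id.sub continuous_const))

lemma eq_zero_of_mem_extremePoints_boxFiber (hx : x ∈ (boxFiber v l u b).extremePoints ℝ)
    (hw : ∀ i, w i ≠ 0 → x i ∈ Ioo (l i) (u i)) (hwv : Fintype.linearCombination ℝ v w = 0) :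
    w = 0 := by
  have hplus := eventually_add_smul_mem_Icc hx.1.1 hw
  have hminus : ∀ᶠ ε : ℝ in 𝓝 0, x - ε • w ∈ Icc l u := by
    simpa [sub_eq_add_neg] using eventually_add_smul_mem_Icc (w := -w) hx.1.1 (by simpa using hw)
  obtain ⟨ε, ⟨hplus, hminus⟩, hε⟩ := (((hplus.and hminus).filter_mono nhdsWithin_le_nhds).and
    (self_mem_nhdsWithin : {0}ᶜ ∈ 𝓝[≠] (0 : ℝ))).exists
  have hxb : Fintype.linearCombination ℝ v x = b := hx.1.2
  have hfix : x - ε • w = x :=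
    hx.2 ⟨hminus, by simp [hwv, hxb]⟩ ⟨hplus, by simp [hwv, hxb]⟩ (mem_openSegment_sub_add x _)
  exact (smul_eq_zero.1 (sub_eq_self.1 hfix)).resolve_left hε

lemma linearIndepOn_of_mem_extremePoints_boxFiber
    (hx : x ∈ (boxFiber v l u b).extremePoints ℝ) :
    LinearIndepOn ℝ v (({i | l i < x i ∧ x i < u i} : Finset ι) : Set ι) := by
  classical
  refine linearIndepOn_finset_iff.2 fun g hg i hi => ?_
  set s : Finset ι := {i | l i < x i ∧ x i < u i}
  have hzero : (fun j => if j ∈ s then g j else 0) = 0 := by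
    refine eq_zero_of_mem_extremePoints_boxFiber hx (fun j hj => ?_) ?_
    · have hjs : j ∈ s := of_not_not fun h => hj (if_neg h)
      simpa [s] using hjs
    · simpa [Fintype.linearCombination_apply, ite_smul, Finset.sum_ite_mem] using hg
  simpa [hi] using congrFun hzero i

lemma exists_mem_boxFiber_card_le_finrank [FiniteDimensional ℝ E]
    (h : (boxFiber v l u b).Nonempty) :
    ∃ x ∈ boxFiber v l u b, Finset.card {i | l i < x i ∧ x i < u i} ≤ finrank ℝ E := by
  obtain ⟨x, hx⟩ := isCompact_boxFiber.extremePoints_nonempty h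
  refine ⟨x, hx.1, ?_⟩
  simpa using (linearIndepOn_of_mem_extremePoints_boxFiber hx).fintype_card_le_finrank

lemma exists_mem_boxFiber_sum_eq_card_le_finrank_add_one [FiniteDimensional ℝ E]
    (hx : x ∈ boxFiber v l u b) :
    ∃ y ∈ boxFiber v l u b, ∑ i, y i = ∑ i, x i ∧
      Finset.card {i | l i < y i ∧ y i < u i} ≤ finrank ℝ E + 1 := by
  -- Appending a coordinate `1` to each vector makes the linear combination record the total too.
  have hmem (y : ι → ℝ) : y ∈ boxFiber (fun i => (v i, (1 : ℝ))) l u (b, ∑ i, x i) ↔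
      y ∈ boxFiber v l u b ∧ ∑ i, y i = ∑ i, x i := by
    simp [boxFiber, Fintype.linearCombination_apply, Prod.ext_iff, Prod.fst_sum, Prod.snd_sum,
      and_assoc]
  obtain ⟨y, hy, hcard⟩ := exists_mem_boxFiber_card_le_finrank ⟨x, (hmem x).2 ⟨hx, rfl⟩⟩
  rw [finrank_prod, finrank_self] at hcard
  exact ⟨y, ((hmem y).1 hy).1, ((hmem y).1 hy).2, hcard⟩

end Box

lemma exists_eq_one_of_card_le_sum {ι : Type*} [Fintype ι] {w : ι → ℝ} (hw₀ : 0 ≤ w)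
    (hw₁ : w ≤ 1) (hpos : 0 < ∑ i, w i)
    (hcard : (Finset.card {i | 0 < w i ∧ w i < 1} : ℝ) ≤ ∑ i, w i) :
    ∃ i, w i = 1 := by
  by_contra! hne
  set s : Finset ι := {i | 0 < w i ∧ w i < 1}
  have hs : ∑ i ∈ s, w i = ∑ i, w i := by
    refine Finset.sum_subset s.subset_univ fun i _ hi => ?_
    by_contra hi₀
    exact hi ((Finset.mem_filter_univ i).2 ⟨(hw₀ i).lt_of_ne' hi₀, (hw₁ i).lt_of_ne (hne i)⟩)
  have hnonempty : s.Nonempty := Finset.nonempty_of_sum_ne_zero (hs ▸ hpos.ne')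
  have hlt : ∑ i ∈ s, w i < ∑ i ∈ s, 1 :=
    Finset.sum_lt_sum_of_nonempty hnonempty fun i _ => (hw₁ i).lt_of_ne (hne i)
  have : ∑ i, w i < s.card := by simpa [hs] using hlt
  exact this.not_ge hcard

section Removal

variable {ι E : Type*} [Fintype ι]

/-- The good index sets of the Grinberg–Sevastyanov argument: `∑ i ∈ A, v i` is a combination of
the same vectors with weights in `[0, 1]` of total at most the dimension. Weights are functions on
all of `ι`, forced to vanish off `A` by the upper bound `A.indicator 1`. -/
def HasShortCombination [AddCommGroup E] [Module ℝ E] (v : ι → E) (A : Finset ι) : Prop :=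
  ∃ w ∈ boxFiber v 0 ((A : Set ι).indicator 1) (∑ i ∈ A, v i), ∑ i, w i ≤ finrank ℝ E

lemma HasShortCombination.norm_sum_le [SeminormedAddCommGroup E] [NormedSpace ℝ E] {v : ι → E}
    {A : Finset ι} (h : HasShortCombination v A) (hv : ∀ i, ‖v i‖ ≤ 1) :
    ‖∑ i ∈ A, v i‖ ≤ finrank ℝ E := by
  obtain ⟨w, ⟨hw, hwv⟩, hsum⟩ := h
  have hwv : ∑ i, w i • v i = ∑ i ∈ A, v i := hwv
  have hterm : ∀ i ∈ Finset.univ, ‖w i • v i‖ ≤ w i := fun i _ => by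
    rw [norm_smul, Real.norm_of_nonneg (hw.1 i)]
    exact mul_le_of_le_one_right (hw.1 i) (hv i)
  calc ‖∑ i ∈ A, v i‖ = ‖∑ i, w i • v i‖ := by rw [hwv]
    _ ≤ ∑ i, w i := norm_sum_le_of_le _ hterm
    _ ≤ finrank ℝ E := hsum

variable [AddCommGroup E] [Module ℝ E] {v : ι → E} {A : Finset ι}

lemma hasShortCombination_univ (hsum : ∑ i, v i = 0) : HasShortCombination v Finset.univ :=
  ⟨0, ⟨by simp, by simp [hsum]⟩, by simp⟩

lemma indicator_mem_boxFiber :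
    (A : Set ι).indicator 1 ∈ boxFiber v 0 ((A : Set ι).indicator 1) (∑ i ∈ A, v i) := by
  classical
  refine ⟨⟨indicator_nonneg fun _ _ => zero_le_one, le_rfl⟩, ?_⟩
  simp [Fintype.linearCombination_apply, indicator_apply, ite_smul]

lemma sum_indicator_one : ∑ i, (A : Set ι).indicator (1 : ι → ℝ) i = A.card := by
  classical
  simp [indicator_apply]

lemma HasShortCombination.exists_sum_eq (h : HasShortCombination v A) {c : ℝ}
    (hc : finrank ℝ E ≤ c) (hcA : c ≤ A.card) :
    ∃ w ∈ boxFiber v 0 ((A : Set ι).indicator 1) (∑ i ∈ A, v i), ∑ i, w i = c := by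
  obtain ⟨w, hw, hsum⟩ := h
  have hconv : Convex ℝ (Fintype.linearCombination ℝ (1 : ι → ℝ) ''
      boxFiber v 0 ((A : Set ι).indicator 1) (∑ i ∈ A, v i)) :=
    convex_boxFiber.linear_image _
  obtain ⟨w', hw', hsum'⟩ := hconv.ordConnected.out (mem_image_of_mem _ hw)
    (mem_image_of_mem _ indicator_mem_boxFiber)
    (show c ∈ Icc _ _ by
      simpa [Fintype.linearCombination_apply, sum_indicator_one] using ⟨hsum.trans hc, hcA⟩)
  exact ⟨w', hw', by simpa [Fintype.linearCombination_apply] using hsum'⟩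

lemma HasShortCombination.exists_weight_eq_one [FiniteDimensional ℝ E]
    (h : HasShortCombination v A) (hA : finrank ℝ E < A.card) :
    ∃ w ∈ boxFiber v 0 ((A : Set ι).indicator 1) (∑ i ∈ A, v i),
      ∑ i, w i = finrank ℝ E + 1 ∧ ∃ i ∈ A, w i = 1 := by
  obtain ⟨w₀, hw₀, hw₀sum⟩ := h.exists_sum_eq (c := finrank ℝ E + 1) (by simp)
    (by exact_mod_cast hA)
  obtain ⟨w, hw, hwsum, hcard⟩ := exists_mem_boxFiber_sum_eq_card_le_finrank_add_one hw₀
  rw [hw₀sum] at hwsum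
  have hmem : ∀ i, 0 < w i → i ∈ A := fun i hi => by
    by_contra hiA
    have hle := hw.1.2 i
    rw [indicator_of_notMem (by simpa using hiA)] at hle
    exact hle.not_gt hi
  have hfree : ∀ i, 0 < w i ∧ w i < 1 → 0 < w i ∧ w i < (A : Set ι).indicator 1 i :=
    fun i ⟨hpos, hlt⟩ => by simp [hpos, hlt, hmem i hpos]
  have hcard' : (Finset.card {i | 0 < w i ∧ w i < 1} : ℝ) ≤ ∑ i, w i := by
    rw [hwsum]
    exact_mod_cast
      (Finset.card_le_card (Finset.monotone_filter_right _ fun i _ => hfree i)).trans hcard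
  obtain ⟨i, hi⟩ := exists_eq_one_of_card_le_sum hw.1.1
    (hw.1.2.trans (indicator_le_self' fun _ _ => zero_le_one)) (hwsum ▸ by positivity) hcard'
  exact ⟨w, hw, hwsum, i, hmem i (hi ▸ one_pos), hi⟩

lemma HasShortCombination.exists_erase [DecidableEq ι] [FiniteDimensional ℝ E]
    (h : HasShortCombination v A) (hA : A.Nonempty) :
    ∃ i ∈ A, HasShortCombination v (A.erase i) := by
  obtain hcard | hcard := lt_or_ge (finrank ℝ E) A.card
  · obtain ⟨w, ⟨hw, hwv⟩, hwsum, i, hi, hwi⟩ := h.exists_weight_eq_one hcard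
    have hwv : Fintype.linearCombination ℝ v w = ∑ j ∈ A, v j := hwv
    refine ⟨i, hi, w - Pi.single i 1, ⟨⟨fun j => ?_, fun j => ?_⟩, ?_⟩, ?_⟩
    · obtain rfl | hj := eq_or_ne j i
      · simp [hwi]
      · simpa [hj] using hw.1 j
    · obtain rfl | hj := eq_or_ne j i
      · simp [hwi]
      · simpa [hj, indicator_apply] using hw.2 j
    · simp [hwv, Fintype.linearCombination_apply_single, Finset.sum_erase_eq_sub hi]
    · simp [Finset.sum_sub_distrib, hwsum]
  · obtain ⟨i, hi⟩ := hA
    refine ⟨i, hi, _, indicator_mem_boxFiber, ?_⟩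
    rw [sum_indicator_one]
    exact_mod_cast Finset.card_erase_le.trans hcard

end Removal

lemma exists_nodup_list_forall_take {α : Type*} [DecidableEq α] {P : Finset α → Prop}
    (hstep : ∀ A : Finset α, A.Nonempty → P A → ∃ a ∈ A, P (A.erase a)) (A : Finset α) (hA : P A) :
    ∃ L : List α, L.Nodup ∧ L.toFinset = A ∧ ∀ p, P (L.take p).toFinset := by
  induction A using Finset.eraseInduction with
  | H A ih =>
    obtain rfl | hne := A.eq_empty_or_nonempty
    · exact ⟨[], by simp, by simp, by simpa using hA⟩
    obtain ⟨a, ha, hPa⟩ := hstep A hne hA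
    obtain ⟨L, hnodup, hL, hprefix⟩ := ih a ha hPa
    have haL : a ∉ L := by simp [← List.mem_toFinset, hL]
    have hLa : (L ++ [a]).toFinset = A := by simp [hL, Finset.insert_erase ha]
    refine ⟨L ++ [a], by simpa using hnodup.concat haL, hLa, fun p => ?_⟩
    obtain hp | hp := le_or_gt p L.length
    · simpa only [List.take_append_of_le_length hp] using hprefix p
    · rwa [List.take_of_length_le (by simpa using hp), hLa]

lemma exists_equiv_forall_initial {α : Type*} [Fintype α] [DecidableEq α] {n : ℕ}
    (hn : Fintype.card α = n) {P : Finset α → Prop} (huniv : P Finset.univ)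
    (hstep : ∀ A : Finset α, A.Nonempty → P A → ∃ a ∈ A, P (A.erase a)) :
    ∃ σ : Fin n ≃ α, ∀ p : ℕ, P (Finset.map σ.toEmbedding {k | (k : ℕ) < p}) := by
  obtain ⟨L, hnodup, hL, hprefix⟩ := exists_nodup_list_forall_take hstep _ huniv
  have hlength : L.length = n := by
    rw [← List.toFinset_card_of_nodup hnodup, hL, Finset.card_univ, hn]
  subst hlength
  have hmem : ∀ a, a ∈ L := fun a => by simp [← List.mem_toFinset, hL]
  refine ⟨hnodup.getEquivOfForallMemList L hmem, fun p => ?_⟩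
  convert hprefix p using 1
  ext a
  simpa using (List.mem_take_iff_idxOf_lt (hmem a)).symm

end Steinitz

open Steinitz

theorem steinitz_dim_two_general {E : Type*} [SeminormedAddCommGroup E] [NormedSpace ℝ E]
    [FiniteDimensional ℝ E] (n : ℕ) (v : Fin n → E) (hv : ∀ i, ‖v i‖ ≤ 1) (hsum : ∑ i, v i = 0) :
    ∃ σ : Equiv.Perm (Fin n), ∀ p : ℕ,
      ‖∑ k ∈ Finset.univ.filter (fun k : Fin n => (k : ℕ) < p), v (σ k)‖ ≤ finrank ℝ E := by
  obtain ⟨σ, hσ⟩ := exists_equiv_forall_initial (Fintype.card_fin n)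
    (hasShortCombination_univ hsum) fun _ hne hA => hA.exists_erase hne
  exact ⟨σ, fun p => by simpa using (hσ p).norm_sum_le hv⟩

/-- **Steinitz theorem in dimension 2.** Vectors `v₁, …, vₙ` in `ℝ²` of norm at most 1
summing to zero can be reordered so that every partial sum has norm at most 2. -/
theorem steinitz_dim_two (n : ℕ) (v : Fin n → EuclideanSpace ℝ (Fin 2))
    (hv : ∀ i, ‖v i‖ ≤ 1) (hsum : ∑ i, v i = 0) :
    ∃ σ : Equiv.Perm (Fin n), ∀ p : ℕ, 1 ≤ p → p ≤ n →
      ‖∑ k ∈ Finset.univ.filter (fun k : Fin n => (k : ℕ) < p), v (σ k)‖ ≤ 2 := by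
  obtain ⟨σ, hσ⟩ := steinitz_dim_two_general n v hv hsum
  exact ⟨σ, fun p _ _ => by simpa using hσ p⟩
end

section
/- Let v_1, …, v_n be vectors in ℝ² with ‖v_i‖ ≤ 1 for every i and with Σ_{i=1}^n v_i = 0. Then there exists a permutation σ of {1,…,n} such that for every p ∈ {1,…,n} the partial sum S_p = Σ_{k=1}^p v_{σ(k)} satisfies ‖S_p‖² ≤ p. -/
/-!
Since the vectors sum to zero, the ones not yet chosen sum to `-S`, where `S` is the current partial
sum, so their inner products with `S` add up to `-‖S‖² ≤ 0`. Some remaining vector `w` therefore has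
`⟪S, w⟫ ≤ 0`, and choosing it next gives `‖S + w‖² ≤ ‖S‖² + ‖w‖²`.
-/

open Finset
open scoped RealInnerProductSpace

section Enumeration

variable {ι : Type*} {n : ℕ}

theorem filter_val_lt_succ_eq_insert {m : ℕ} (hm : m < n) :
    univ.filter (fun k : Fin n ↦ k.val < m + 1) =
      insert ⟨m, hm⟩ (univ.filter fun k : Fin n ↦ k.val < m) := by
  ext k
  simp only [mem_filter, mem_univ, true_and, mem_insert, Fin.ext_iff]
  omega

theorem sum_filter_val_lt_le_of_le_one {R : Type*} [Semiring R] [PartialOrder R] [IsOrderedRing R]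
    {f : Fin n → R} (hf : ∀ k, f k ≤ 1) (p : ℕ) : ∑ k : Fin n with k.val < p, f k ≤ p := by
  have h_card : #{k : Fin n | k.val < p} ≤ p :=
    Fin.card_filter_val_lt.trans_le (min_le_right n p)
  calc ∑ k : Fin n with k.val < p, f k
      ≤ #{k : Fin n | k.val < p} • (1 : R) := sum_le_card_nsmul _ _ _ fun k _ ↦ hf k
    _ ≤ p := (nsmul_one _).trans_le (Nat.mono_cast h_card)

theorem map_swap_trans_of_notMem {α : Type*} [DecidableEq α] {s : Finset α} {a b : α}
    (ha : a ∉ s) (hb : b ∉ s) (e : α ≃ ι) :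
    s.map ((Equiv.swap a b).trans e).toEmbedding = s.map e.toEmbedding := by
  classical
  simp only [map_eq_image]
  exact image_congr fun k hk ↦ congrArg e <|
    Equiv.swap_apply_of_ne_of_ne (ne_of_mem_of_not_mem hk ha) (ne_of_mem_of_not_mem hk hb)

theorem exists_equiv_forall_map_filter_val_lt [Fintype ι] [DecidableEq ι]
    (hn : Fintype.card ι = n) {P : Finset ι → Prop} (h_empty : P ∅)
    (h_insert : ∀ s, P s → s ≠ univ → ∃ i ∉ s, P (insert i s)) :
    ∃ e : Fin n ≃ ι, ∀ p ≤ n, P (Finset.map e.toEmbedding {k | k.val < p}) := by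
  suffices ∀ m ≤ n, ∃ e : Fin n ≃ ι, ∀ p ≤ m,
      P (Finset.map e.toEmbedding {k | k.val < p}) from this n le_rfl
  intro m hm
  induction m with
  | zero => exact ⟨(Fintype.equivFinOfCardEq hn).symm, fun p hp ↦ by simpa [Nat.le_zero.1 hp]⟩
  | succ m ih =>
    obtain ⟨e, he⟩ := ih (Nat.le_of_succ_le hm)
    let last : Fin n := ⟨m, hm⟩
    have h_proper : Finset.map e.toEmbedding {k | k.val < m} ≠ univ := fun h ↦ by
      simpa [last] using h.ge (mem_univ (e last))
    obtain ⟨i, hi, hPi⟩ := h_insert _ (he m le_rfl) h_proper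
    -- Moving `i` into position `m` by a transposition only disturbs positions from `m` on.
    have h_map : ∀ p ≤ m,
        Finset.map ((Equiv.swap last (e.symm i)).trans e).toEmbedding {k | k.val < p} =
          Finset.map e.toEmbedding {k | k.val < p} := fun p hp ↦ by
      have hmi : m ≤ e.symm i := by simpa [mem_map_equiv] using hi
      exact map_swap_trans_of_notMem (by simpa [last] using hp) (by simpa using hp.trans hmi) e
    refine ⟨(Equiv.swap last (e.symm i)).trans e, fun p hp ↦ ?_⟩
    obtain hpm | rfl := Nat.le_succ_iff.1 hp
    · rw [h_map p hpm]
      exact he p hpm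
    · rw [filter_val_lt_succ_eq_insert hm, map_insert, h_map m le_rfl]
      simpa [last] using hPi

end Enumeration

section InnerProductSpace

variable {E : Type*} [SeminormedAddCommGroup E] [InnerProductSpace ℝ E]

theorem norm_add_sq_le_of_inner_nonpos {x y : E} (h : ⟪x, y⟫ ≤ 0) :
    ‖x + y‖ ^ 2 ≤ ‖x‖ ^ 2 + ‖y‖ ^ 2 := by
  rw [norm_add_sq_real]
  linarith

theorem exists_notMem_inner_sum_nonpos {ι : Type*} [Fintype ι] {v : ι → E} (hv : ∑ i, v i = 0)
    {s : Finset ι} (hs : s ≠ univ) : ∃ i ∉ s, ⟪∑ j ∈ s, v j, v i⟫ ≤ 0 := by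
  classical
  have h_compl : ∑ i ∈ sᶜ, v i = -∑ j ∈ s, v j :=
    eq_neg_of_add_eq_zero_right ((sum_add_sum_compl s v).trans hv)
  have h_sum : ∑ i ∈ sᶜ, ⟪∑ j ∈ s, v j, v i⟫ ≤ ∑ _i ∈ sᶜ, (0 : ℝ) := by
    rw [← inner_sum, h_compl, inner_neg_right, sum_const_zero]
    exact neg_nonpos.2 real_inner_self_nonneg
  have h_nonempty : sᶜ.Nonempty := nonempty_iff_ne_empty.2 (mt (compl_eq_empty_iff s).1 hs)
  obtain ⟨i, hi, h_inner⟩ := exists_le_of_sum_le h_nonempty h_sum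
  exact ⟨i, mem_compl.1 hi, h_inner⟩

theorem steinitz_dim_two_sq_bound_general {ι : Type*} [Fintype ι] {n : ℕ}
    (hn : Fintype.card ι = n) {v : ι → E} (hv : ∑ i, v i = 0) :
    ∃ e : Fin n ≃ ι, ∀ p ≤ n,
      ‖∑ k : Fin n with k.val < p, v (e k)‖ ^ 2 ≤ ∑ k : Fin n with k.val < p, ‖v (e k)‖ ^ 2 := by
  classical
  obtain ⟨e, he⟩ := exists_equiv_forall_map_filter_val_lt hn
    (P := fun s ↦ ‖∑ i ∈ s, v i‖ ^ 2 ≤ ∑ i ∈ s, ‖v i‖ ^ 2) (by simp) fun s hs hs_univ ↦ by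
      obtain ⟨i, hi, h_inner⟩ := exists_notMem_inner_sum_nonpos hv hs_univ
      refine ⟨i, hi, ?_⟩
      rw [sum_insert hi, sum_insert hi, add_comm (v i), add_comm (‖v i‖ ^ 2)]
      exact (norm_add_sq_le_of_inner_nonpos h_inner).trans (by gcongr)
  exact ⟨e, fun p hp ↦ by simpa only [sum_map, Equiv.coe_toEmbedding] using he p hp⟩

end InnerProductSpace

/-- **Quantitative Steinitz increment bound.** Vectors `v₁, …, vₙ` in `ℝ²` of norm at
most 1 summing to zero can be reordered so that every partial sum `S_p` satisfies
`‖S_p‖² ≤ p`. -/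
theorem steinitz_dim_two_sq_bound (n : ℕ) (v : Fin n → EuclideanSpace ℝ (Fin 2))
    (hv : ∀ i, ‖v i‖ ≤ 1) (hsum : ∑ i, v i = 0) :
    ∃ σ : Equiv.Perm (Fin n), ∀ p : ℕ, 1 ≤ p → p ≤ n →
      ‖∑ k ∈ Finset.univ.filter (fun k : Fin n => (k : ℕ) < p), v (σ k)‖ ^ 2 ≤ (p : ℝ) := by
  obtain ⟨σ, hσ⟩ := steinitz_dim_two_sq_bound_general (Fintype.card_fin n) hsum
  exact ⟨σ, fun p _ hp ↦ (hσ p hp).trans <|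
    sum_filter_val_lt_le_of_le_one (fun k ↦ pow_le_one₀ (norm_nonneg _) (hv (σ k))) p⟩
end
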